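/- There is a universal constant C > 0 such that for all n ≥ 1 and t with t ≤ 2^{n/2}/C, every partial injective function I on {0,1}^{2n} with |I| = t, every x ∉ Dom(I) and y ∉ Im(I), and every (π,ω) ∈ R_{I[x→y]}, setting A := π * I * ω: |1/√(|R_{I[x→y]}|·(N − t)) − 1/√(|R_{x,I}|·|V_{π(x),A}|)| ≤ C·(t²/2^n)·(1/√(|R_{I[x→y]}|·(N − t))). -/

import Mathlib

/-!
Write `A = π * I * ω`, `M = 2^n` and `N = M ^ 2`. The proof has two ingredients.

* An exact averaging identity: `|R_{I[x→y]}| * (N - t) = ∑_{(π, ω) ∈ R_{x,I}} |V_{π(x),A}|`.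
  Whether `(π, ω)` lies in `R_{x,I}`, and the set `V_{π(x),A}`, depend on `ω⁻¹` only through its
  values on `Im I`; the value `ω⁻¹(y)` may be moved freely over the `N - t` points outside `Im A`
  by composing `ω` with a transposition `(y z)`, `z ∉ Im I`, and the pair resolves `I[x→y]`
  precisely when that value is in `V_{π(x),A}` (`card_RI_mul`).
* If `V_{u,A}` is nonempty, a point `v` is in it as soon as `v_L` avoids at most `t + 2 t ^ 2`
  values, so `M * (M - 3 t ^ 2) ≤ |V_{u,A}| ≤ M ^ 2` (`le_ncard_Vset`).

Hence the quantities `|R_{I[x→y]}| * (N - t)` and `|R_{x,I}| * |V_{π(x),A}|` both lie in the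
interval `|R_{x,I}| * [M * (M - 3 t ^ 2), M ^ 2]`, and comparing inverse square roots
(`inv_sqrt_close`) gives the claim with `C = 6`.
-/

/-! Common setup: bit strings, databases, chains, canonical triples,
allowable partial injective functions, twirling. -/

instance (w : ℕ) : Fintype (BitVec w) :=
  Fintype.ofEquiv (Fin (2 ^ w)) ⟨BitVec.ofFin, BitVec.toFin, fun _ => rfl, fun _ => rfl⟩

namespace CPO

/-- `W n` is the set of `n`-bit strings. -/
abbrev W (n : ℕ) := BitVec n

/-- `TW n` models `{0,1}^{2n}` as a pair (left half, right half). -/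
abbrev TW (n : ℕ) := BitVec n × BitVec n

/-- A database: a partial function from `{0,1}^n` to `{0,1}^n`. -/
abbrev DB (n : ℕ) := BitVec n → Option (BitVec n)

/-- A triple of databases `(D_h, D_k, D_f)`. -/
abbrev T3 (n : ℕ) := DB n × DB n × DB n

/-- A partial function on `{0,1}^{2n}`. -/
abbrev PF (n : ℕ) := TW n → Option (TW n)

/-- Domain of a database. -/
def dbDom {n : ℕ} (D : DB n) : Set (W n) := {w | D w ≠ none}

/-- Size of a database. -/
noncomputable def dbSize {n : ℕ} (D : DB n) : ℕ := (dbDom D).ncard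

/-- Partial injectivity. -/
def PInj {n : ℕ} (I : PF n) : Prop :=
  ∀ x x' y, I x = some y → I x' = some y → x = x'

def piDom {n : ℕ} (I : PF n) : Set (TW n) := {x | I x ≠ none}

def piIm {n : ℕ} (I : PF n) : Set (TW n) := {y | ∃ x, I x = some y}

noncomputable def piSize {n : ℕ} (I : PF n) : ℕ := (piDom I).ncard

/-- There is a chain `(u, m, v)` in the triple `T = (D_h, D_k, D_f)`:
`D_h(u_L) ⊕ u_R = m = D_f(v_L) ⊕ v_R` and `u_L ⊕ v_L = D_k(m)`. -/
def IsChain {n : ℕ} (T : T3 n) (u : TW n) (m : W n) (v : TW n) : Prop :=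
  T.1 u.1 = some (m ^^^ u.2) ∧ T.2.2 v.1 = some (m ^^^ v.2) ∧ T.2.1 m = some (u.1 ^^^ v.1)

/-- The set of chains of a triple, as triples `(u, (m, v))`. -/
def chainsSet {n : ℕ} (T : T3 n) : Set (TW n × W n × TW n) :=
  {c | IsChain T c.1 c.2.1 c.2.2}

/-- Two chains collide if they share `m`, `u_L` or `v_L`. -/
def Collide {n : ℕ} (c c' : TW n × W n × TW n) : Prop :=
  c.2.1 = c'.2.1 ∨ c.1.1 = c'.1.1 ∨ c.2.2.1 = c'.2.2.1

/-- A triple is canonical if no two distinct chains collide and every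
input-output pair of each database participates in exactly one chain. -/
def Canonical {n : ℕ} (T : T3 n) : Prop :=
  (∀ c ∈ chainsSet T, ∀ c' ∈ chainsSet T, c ≠ c' → ¬ Collide c c') ∧
  (∀ w, T.1 w ≠ none → ∃! c, c ∈ chainsSet T ∧ c.1.1 = w) ∧
  (∀ m, T.2.1 m ≠ none → ∃! c, c ∈ chainsSet T ∧ c.2.1 = m) ∧
  (∀ w, T.2.2 w ≠ none → ∃! c, c ∈ chainsSet T ∧ c.2.2.1 = w)

/-- `Supports T I` : the partial function supported by `T` is exactly `I`
(i.e. `Supp(T) = I`). -/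
def Supports {n : ℕ} (T : T3 n) (I : PF n) : Prop :=
  ∀ u v, I u = some v ↔ ∃ m, IsChain T u m v

open Classical in
/-- The partial function supported by a triple (choice-based representative). -/
noncomputable def suppFun {n : ℕ} (T : T3 n) : PF n :=
  fun u => if h : ∃ v, ∃ m, IsChain T u m v then some h.choose else none

/-- An allowable partial injective function: no input, output, or internal
left collisions. -/
def AllowableI {n : ℕ} (I : PF n) : Prop :=
  PInj I ∧
  (∀ x x', x ∈ piDom I → x' ∈ piDom I → x ≠ x' → x.1 ≠ x'.1) ∧
  (∀ y y', y ∈ piIm I → y' ∈ piIm I → y ≠ y' → y.1 ≠ y'.1) ∧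
  (∀ x y x' y', I x = some y → x' ∈ piDom I → y' ∈ piIm I →
    (x, y) ≠ (x', y') → x.1 ^^^ y.1 ≠ x'.1 ^^^ y'.1)

/-- `A` allows `u` if some extension `A[u→v]` is allowable. -/
def Allows {n : ℕ} (A : PF n) (u : TW n) : Prop :=
  ∃ v, AllowableI (Function.update A u (some v))

/-- `V_{u,A}`: the set of `v` such that `A[u→v]` is allowable. -/
def Vset {n : ℕ} (A : PF n) (u : TW n) : Set (TW n) :=
  {v | AllowableI (Function.update A u (some v))}

/-- `L_{u,A}`: the set of left substrings of elements of `V_{u,A}`. -/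
def Lset {n : ℕ} (A : PF n) (u : TW n) : Set (W n) :=
  {c | ∃ v ∈ Vset A u, v.1 = c}

/-- `D(I)`: the set of canonical triples supporting `I`. -/
def DofA {n : ℕ} (I : PF n) : Set (T3 n) := {T | Canonical T ∧ Supports T I}

end CPO
namespace CPO

/-- `π * I * ω := {(π(x), ω⁻¹(y)) : (x,y) ∈ I}`, as a partial function. -/
def twirl {n : ℕ} (π ω : Equiv.Perm (TW n)) (I : PF n) : PF n :=
  fun a => (I (π.symm a)).map ω.symm

/-- `(π, ω)` resolves `I` if `π * I * ω` is allowable. -/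
def Resolves {n : ℕ} (π ω : Equiv.Perm (TW n)) (I : PF n) : Prop :=
  AllowableI (twirl π ω I)

/-- `R_I`: the set of permutation pairs resolving `I`. -/
def RI {n : ℕ} (I : PF n) : Set (Equiv.Perm (TW n) × Equiv.Perm (TW n)) :=
  {p | Resolves p.1 p.2 I}

/-- `R_{x,I}`: the pairs resolving `I` whose inner database allows `π(x)`. -/
def RxI {n : ℕ} (I : PF n) (x : TW n) : Set (Equiv.Perm (TW n) × Equiv.Perm (TW n)) :=
  {p | p ∈ RI I ∧ Allows (twirl p.1 p.2 I) (p.1 x)}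

end CPO
namespace CPO

variable {n : ℕ}

/-! ### Allowable extensions and the size of `V_{u,A}` -/

lemma update_eq_some_iff {A : PF n} {u v a w : TW n} :
    Function.update A u (some v) a = some w ↔ (a = u ∧ w = v) ∨ (a ≠ u ∧ A a = some w) := by
  by_cases h : a = u
  · subst h; simp [eq_comm]
  · simp [h]

lemma piDom_update {A : PF n} {u v : TW n} :
    piDom (Function.update A u (some v)) = insert u (piDom A) := by
  ext a
  by_cases h : a = u
  · subst h; simp [piDom]
  · simp [piDom, h]

lemma piIm_update {A : PF n} {u v : TW n} (hu : A u = none) :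
    piIm (Function.update A u (some v)) = insert v (piIm A) := by
  ext w
  simp only [piIm, Set.mem_ofPred_eq, Set.mem_insert_iff, update_eq_some_iff]
  constructor
  · rintro ⟨a, ⟨_, h⟩ | ⟨_, h⟩⟩
    · exact Or.inl h
    · exact Or.inr ⟨a, h⟩
  · rintro (h | ⟨a, h⟩)
    · exact ⟨u, Or.inl ⟨rfl, h⟩⟩
    · exact ⟨a, Or.inr ⟨by rintro rfl; simp [hu] at h, h⟩⟩

lemma mem_piDom_of_eq {A : PF n} {a b : TW n} (h : A a = some b) : a ∈ piDom A := by
  simp [piDom, h]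

lemma AllowableI.of_update {A : PF n} {u v : TW n} (hu : A u = none)
    (h : AllowableI (Function.update A u (some v))) : AllowableI A := by
  have key : ∀ a w, A a = some w → Function.update A u (some v) a = some w := by
    intro a w haw
    exact update_eq_some_iff.2 (Or.inr ⟨by rintro rfl; simp [hu] at haw, haw⟩)
  obtain ⟨h1, h2, h3, h4⟩ := h
  rw [piDom_update, piIm_update hu] at h4
  rw [piDom_update] at h2
  rw [piIm_update hu] at h3
  exact ⟨fun a a' w ha ha' => h1 a a' w (key _ _ ha) (key _ _ ha'),
    fun a a' ha ha' => h2 a a' (Or.inr ha) (Or.inr ha'),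
    fun a a' ha ha' => h3 a a' (Or.inr ha) (Or.inr ha'),
    fun a b a' b' hab ha' hb' => h4 a b a' b' (key _ _ hab) (Or.inr ha') (Or.inr hb')⟩

lemma notMem_piIm_of_mem_Vset {A : PF n} {u v : TW n} (hu : A u = none)
    (h : v ∈ Vset A u) : v ∉ piIm A := by
  rintro ⟨a, ha⟩
  have hne : a ≠ u := by rintro rfl; simp [hu] at ha
  exact hne (h.1 a u v (update_eq_some_iff.2 (Or.inr ⟨hne, ha⟩))
    (update_eq_some_iff.2 (Or.inl ⟨rfl, rfl⟩)))

lemma eq_xor_of_xor_eq {a b c : BitVec n} (h : a ^^^ b = c) : b = a ^^^ c := by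
  rw [← h, ← BitVec.xor_assoc, BitVec.xor_self, BitVec.zero_xor]

/-- Once `u` is allowed by `A`, the only constraints on `v` concern its left half: it must avoid
the left halves of `Im A`, the values `x_L ⊕ y_L ⊕ u_L`, and the values `x_L ⊕ y_L ⊕ x'_L` for
`(x, y) ∈ A`. -/
lemma mem_Vset_of_avoids {A : PF n} {u v v₀ : TW n} (hu : A u = none) (h₀ : v₀ ∈ Vset A u)
    (h1 : ∀ b ∈ piIm A, v.1 ≠ b.1)
    (h2 : ∀ a ∈ piDom A, ∀ b ∈ piIm A, v.1 ≠ u.1 ^^^ (a.1 ^^^ b.1))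
    (h3 : ∀ a b, A a = some b → ∀ a' ∈ piDom A, v.1 ≠ a'.1 ^^^ (a.1 ^^^ b.1)) :
    v ∈ Vset A u := by
  have hA := AllowableI.of_update hu h₀
  obtain ⟨-, g2, -, g4⟩ := h₀
  rw [piDom_update] at g2
  rw [piDom_update, piIm_update hu] at g4
  refine ⟨?_, ?_, ?_, ?_⟩
  · intro a a' w ha ha'
    rcases update_eq_some_iff.1 ha with ⟨e, f⟩ | ⟨e, f⟩ <;>
      rcases update_eq_some_iff.1 ha' with ⟨e', f'⟩ | ⟨e', f'⟩
    · rw [e, e']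
    · subst f; exact absurd rfl (h1 _ ⟨_, f'⟩)
    · subst f'; exact absurd rfl (h1 _ ⟨_, f⟩)
    · exact hA.1 _ _ _ f f'
  · rw [piDom_update]; exact g2
  · rw [piIm_update hu]
    rintro b b' (rfl | hb) (rfl | hb') hne
    · exact absurd rfl hne
    · exact h1 _ hb'
    · exact (h1 _ hb).symm
    · exact hA.2.2.1 _ _ hb hb' hne
  · rw [piDom_update, piIm_update hu]
    intro a b a' b' hab ha' hb' hne heq
    rcases update_eq_some_iff.1 hab with ⟨rfl, rfl⟩ | ⟨hau, hab'⟩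
    · rcases ha' with rfl | ha' <;> rcases hb' with rfl | hb'
      · exact hne rfl
      · have := eq_xor_of_xor_eq heq
        rw [← BitVec.xor_assoc, BitVec.xor_self, BitVec.zero_xor] at this
        exact h1 _ hb' this
      ·
        -- Here `u_L = x'_L`, contradicting the absence of input collisions.
        have h := eq_xor_of_xor_eq ((BitVec.xor_comm _ _).trans heq)
        rw [BitVec.xor_comm a'.1, ← BitVec.xor_assoc, BitVec.xor_self, BitVec.zero_xor] at h
        refine g2 a a' (Or.inl rfl) (Or.inr ha') ?_ h
        rintro rfl
        exact hne rfl
      · exact h2 _ ha' _ hb' (eq_xor_of_xor_eq heq)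
    · have key : Function.update A u (some v₀) a = some b :=
        update_eq_some_iff.2 (Or.inr ⟨hau, hab'⟩)
      rcases hb' with rfl | hb'
      · rcases ha' with rfl | ha'
        · exact h2 a (mem_piDom_of_eq hab') b ⟨a, hab'⟩ (eq_xor_of_xor_eq heq.symm)
        · exact h3 a b hab' _ ha' (eq_xor_of_xor_eq heq.symm)
      · exact g4 a b a' b' key ha' (Or.inr hb') hne heq

lemma piIm_eq_image (A : PF n) : piIm A = (fun a => (A a).getD 0) '' piDom A := by
  ext b
  constructor
  · rintro ⟨a, ha⟩
    exact ⟨a, mem_piDom_of_eq ha, by simp [ha]⟩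
  · rintro ⟨a, ha, rfl⟩
    obtain ⟨b, hb⟩ := Option.ne_none_iff_exists'.1 ha
    exact ⟨a, by simp [hb]⟩

lemma ncard_piIm {A : PF n} (hA : PInj A) : (piIm A).ncard = piSize A := by
  rw [piIm_eq_image, piSize]
  refine Set.InjOn.ncard_image ?_
  intro a ha a' ha' h
  obtain ⟨b, hb⟩ := Option.ne_none_iff_exists'.1 ha
  obtain ⟨b', hb'⟩ := Option.ne_none_iff_exists'.1 ha'
  simp only [hb, hb', Option.getD_some] at h
  exact hA a a' b hb (h ▸ hb')

lemma card_W (n : ℕ) : Nat.card (W n) = 2 ^ n := by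
  rw [Nat.card_congr (⟨BitVec.toFin, BitVec.ofFin, fun _ => rfl, fun _ => rfl⟩ : W n ≃ Fin (2 ^ n))]
  simp

lemma card_TW (n : ℕ) : Nat.card (TW n) = 2 ^ n * 2 ^ n := by
  rw [Nat.card_prod, card_W]

lemma le_ncard_Vset {A : PF n} {u v₀ : TW n} (hu : A u = none) (h₀ : v₀ ∈ Vset A u) :
    2 ^ n * 2 ^ n ≤ (Vset A u).ncard + 3 * piSize A ^ 2 * 2 ^ n := by
  have hA := AllowableI.of_update hu h₀
  set D := piDom A with hD
  set E := piIm A with hE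
  -- The left halves that `mem_Vset_of_avoids` asks to avoid.
  set B : Set (W n) := Prod.fst '' E ∪
    ((fun q : TW n × TW n => u.1 ^^^ (q.1.1 ^^^ q.2.1)) '' (D ×ˢ E) ∪
     (fun q : TW n × TW n => q.2.1 ^^^ (q.1.1 ^^^ ((A q.1).getD 0).1)) '' (D ×ˢ D)) with hB
  have hDc : D.ncard = piSize A := rfl
  have hEc : E.ncard = piSize A := ncard_piIm hA.1
  have hBc : B.ncard ≤ 3 * piSize A ^ 2 := by
    have i1 : (Prod.fst '' E).ncard ≤ piSize A := hEc ▸ Set.ncard_image_le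
    have i2 : ((fun q : TW n × TW n => u.1 ^^^ (q.1.1 ^^^ q.2.1)) '' (D ×ˢ E)).ncard
        ≤ piSize A * piSize A := by
      refine le_trans Set.ncard_image_le ?_
      rw [Set.ncard_prod, hDc, hEc]
    have i3 : ((fun q : TW n × TW n => q.2.1 ^^^ (q.1.1 ^^^ ((A q.1).getD 0).1)) ''
        (D ×ˢ D)).ncard ≤ piSize A * piSize A := by
      refine le_trans Set.ncard_image_le ?_
      rw [Set.ncard_prod, hDc]
    have i4 := Set.ncard_union_le (Prod.fst '' E)
      ((fun q : TW n × TW n => u.1 ^^^ (q.1.1 ^^^ q.2.1)) '' (D ×ˢ E) ∪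
       (fun q : TW n × TW n => q.2.1 ^^^ (q.1.1 ^^^ ((A q.1).getD 0).1)) '' (D ×ˢ D))
    have i5 := Set.ncard_union_le
      ((fun q : TW n × TW n => u.1 ^^^ (q.1.1 ^^^ q.2.1)) '' (D ×ˢ E))
      ((fun q : TW n × TW n => q.2.1 ^^^ (q.1.1 ^^^ ((A q.1).getD 0).1)) '' (D ×ˢ D))
    have i6 : piSize A ≤ piSize A * piSize A := Nat.le_mul_self _
    rw [hB, pow_two]
    omega
  have hsub : (Bᶜ ×ˢ (Set.univ : Set (W n))) ⊆ Vset A u := by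
    rintro v ⟨hv, -⟩
    refine mem_Vset_of_avoids hu h₀ ?_ ?_ ?_
    · intro b hb e
      exact hv (Or.inl ⟨b, hb, e.symm⟩)
    · intro a ha b hb e
      exact hv (Or.inr (Or.inl ⟨(a, b), ⟨ha, hb⟩, e.symm⟩))
    · intro a b hab a' ha' e
      exact hv (Or.inr (Or.inr ⟨(a, a'), ⟨mem_piDom_of_eq hab, ha'⟩, by simp [hab, e]⟩))
  have h1 := Set.ncard_le_ncard hsub
  rw [Set.ncard_prod, Set.ncard_univ, card_W] at h1
  have h2 := Set.ncard_add_ncard_compl B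
  rw [card_W] at h2
  calc 2 ^ n * 2 ^ n = Bᶜ.ncard * 2 ^ n + B.ncard * 2 ^ n := by
        rw [← h2]; ring
    _ ≤ _ := Nat.add_le_add h1 (Nat.mul_le_mul_right _ hBc)

lemma ncard_Vset_le (A : PF n) (u : TW n) : (Vset A u).ncard ≤ 2 ^ n * 2 ^ n := by
  rw [← card_TW]; exact Set.ncard_le_card _

/-! ### Twirling and the averaging identity -/

lemma twirl_update (π ω : Equiv.Perm (TW n)) (I : PF n) (x y : TW n) :
    twirl π ω (Function.update I x (some y)) =
      Function.update (twirl π ω I) (π x) (some (ω.symm y)) := by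
  funext a
  by_cases h : a = π x
  · subst h; simp [twirl]
  · have h' : π.symm a ≠ x := fun e => h (by rw [← e, Equiv.apply_symm_apply])
    simp [twirl, h, h']

lemma twirl_apply_eq_none {π ω : Equiv.Perm (TW n)} {I : PF n} {x : TW n} (hx : I x = none) :
    twirl π ω I (π x) = none := by
  simp [twirl, hx]

lemma mem_piIm_twirl {π ω : Equiv.Perm (TW n)} {I : PF n} {z : TW n} (hz : ω z ∈ piIm I) :
    z ∈ piIm (twirl π ω I) := by
  obtain ⟨a, ha⟩ := hz
  exact ⟨π a, by simp [twirl, ha]⟩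

/-- Post-composing `ω` with a transposition of two points outside `Im I` leaves the twirl of `I`
unchanged. -/
lemma twirl_swap (π ω : Equiv.Perm (TW n)) {I : PF n} {y z : TW n}
    (hy : y ∉ piIm I) (hz : z ∉ piIm I) :
    twirl π (Equiv.swap y z * ω) I = twirl π ω I := by
  funext a
  unfold twirl
  cases h : I (π.symm a) with
  | none => rfl
  | some b =>
    have hb : b ∈ piIm I := ⟨_, h⟩
    have h1 : b ≠ y := fun e => hy (e ▸ hb)
    have h2 : b ≠ z := fun e => hz (e ▸ hb)
    simp only [Option.map_some, Option.some.injEq]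
    rw [Equiv.symm_apply_eq, Equiv.Perm.mul_apply, Equiv.apply_symm_apply,
      Equiv.swap_apply_of_ne_of_ne h1 h2]

lemma piSize_twirl (π ω : Equiv.Perm (TW n)) (I : PF n) : piSize (twirl π ω I) = piSize I := by
  have : piDom (twirl π ω I) = π '' piDom I := by
    ext a
    simp [piDom, twirl, Equiv.image_eq_preimage_symm]
  rw [piSize, this, Set.ncard_image_of_injective _ π.injective, piSize]

lemma mem_RI_update {I : PF n} {x y : TW n} {p : Equiv.Perm (TW n) × Equiv.Perm (TW n)} :
    p ∈ RI (Function.update I x (some y)) ↔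
      p.2.symm y ∈ Vset (twirl p.1 p.2 I) (p.1 x) := by
  simp only [RI, Resolves, Vset, Set.mem_ofPred_eq, twirl_update]

lemma mem_RxI_of_mem_Vset {I : PF n} {x v : TW n} (hx : I x = none)
    {p : Equiv.Perm (TW n) × Equiv.Perm (TW n)}
    (h : v ∈ Vset (twirl p.1 p.2 I) (p.1 x)) : p ∈ RxI I x :=
  ⟨AllowableI.of_update (twirl_apply_eq_none hx) h, v, h⟩

open Classical in
/-- The averaging identity `|R_{I[x→y]}| * |(Im I)ᶜ| = ∑_{p ∈ R_{x,I}} |V_{π(x),A}|`. The bijection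
sends `((π, ω), z)` to `((π, (y z) ∘ ω), ω⁻¹(y))`. -/
lemma card_RI_mul {I : PF n} {x y : TW n} (hx : I x = none) (hy : y ∉ piIm I) :
    (RI (Function.update I x (some y))).ncard * (piIm I)ᶜ.ncard =
      ∑ p ∈ (RxI I x).toFinset, (Vset (twirl p.1 p.2 I) (p.1 x)).ncard := by
  simp only [Set.ncard_eq_toFinset_card']
  rw [← Finset.card_product, ← Finset.card_sigma]
  refine Finset.card_nbij'
    (fun q => ⟨(q.1.1, Equiv.swap y q.2 * q.1.2), q.1.2.symm y⟩)
    (fun q => ((q.1.1, Equiv.swap y (q.1.2 q.2) * q.1.2), q.1.2 q.2)) ?_ ?_ ?_ ?_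
  · rintro ⟨⟨π, ω⟩, z⟩ hq
    simp only [Finset.coe_product, Set.coe_toFinset, Set.mem_prod, Set.mem_compl_iff,
      mem_RI_update] at hq
    obtain ⟨h1, h2⟩ := hq
    simp only [Finset.coe_sigma, Set.coe_toFinset, Set.mem_sigma_iff]
    rw [← twirl_swap π ω hy h2] at h1
    exact ⟨mem_RxI_of_mem_Vset (p := (π, Equiv.swap y z * ω)) hx h1, h1⟩
  · rintro ⟨⟨π, ω⟩, v⟩ hq
    simp only [Finset.coe_sigma, Set.coe_toFinset, Set.mem_sigma_iff] at hq
    obtain ⟨-, h2⟩ := hq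
    have hz : ω v ∉ piIm I := fun h =>
      notMem_piIm_of_mem_Vset (twirl_apply_eq_none hx) h2 (mem_piIm_twirl h)
    simp only [Finset.coe_product, Set.coe_toFinset, Set.mem_prod, Set.mem_compl_iff,
      mem_RI_update]
    refine ⟨?_, hz⟩
    rw [twirl_swap π ω hy hz]
    have : (Equiv.swap y (ω v) * ω).symm y = v := by
      rw [Equiv.symm_apply_eq]; simp
    rw [this]
    exact h2
  · rintro ⟨⟨π, ω⟩, z⟩ -
    simp [← mul_assoc]
  · rintro ⟨⟨π, ω⟩, v⟩ -
    have : (Equiv.swap y (ω v) * ω).symm y = v := by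
      rw [Equiv.symm_apply_eq]; simp
    simp [← mul_assoc, this]

/-! ### Comparison of inverse square roots -/

/-- If `a` and `b` both lie in `[k * (M * M - 3 * s * M), k * (M * M)]` and `36 * s ≤ M`, then
`1 / √a` and `1 / √b` agree up to a relative error `6 * s / M`. -/
lemma inv_sqrt_close {a b k M s : ℝ} (hk : 0 < k) (hM : 0 < M) (hs : 0 ≤ s) (hsM : 36 * s ≤ M)
    (ha : k * (M * M - 3 * s * M) ≤ a) (ha' : a ≤ k * (M * M))
    (hb : k * (M * M - 3 * s * M) ≤ b) (hb' : b ≤ k * (M * M)) :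
    |1 / √a - 1 / √b| ≤ 6 * (s / M) * (1 / √a) := by
  have h0 : k * (M * M) / 2 ≤ k * (M * M - 3 * s * M) := by
    have : 0 ≤ k * M * (M - 6 * s) := by
      apply mul_nonneg (by positivity); linarith
    linarith
  have hpos : 0 < k * (M * M) := by positivity
  have hapos : 0 < a := by linarith
  have hbpos : 0 < b := by linarith
  have hsa := Real.sqrt_pos.2 hapos
  have hsb := Real.sqrt_pos.2 hbpos
  have hdiff : |b - a| ≤ 6 * (s / M) * b := by
    have h1 : |b - a| ≤ 3 * k * s * M := by
      rw [abs_le]; constructor <;> linarith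
    have h2 : 6 * (s / M) * (k * (M * M) / 2) ≤ 6 * (s / M) * b :=
      mul_le_mul_of_nonneg_left (by linarith) (by positivity)
    have h3 : 6 * (s / M) * (k * (M * M) / 2) = 3 * k * s * M := by
      field_simp; ring
    linarith
  have hsq : |√b - √a| ≤ 6 * (s / M) * √b := by
    refine le_of_mul_le_mul_right ?_ hsb
    calc |√b - √a| * √b ≤ |√b - √a| * (√b + √a) :=
          mul_le_mul_of_nonneg_left (by linarith) (abs_nonneg _)
      _ = |b - a| := by
          have h := abs_mul (√b - √a) (√b + √a)
          rw [abs_of_pos (add_pos hsb hsa)] at h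
          rw [← h]
          congr 1
          linear_combination Real.mul_self_sqrt hbpos.le - Real.mul_self_sqrt hapos.le
      _ ≤ 6 * (s / M) * b := hdiff
      _ = 6 * (s / M) * √b * √b := by rw [mul_assoc _ √b, Real.mul_self_sqrt hbpos.le]
  have e1 : 1 / √a - 1 / √b = (√b - √a) / (√a * √b) := by field_simp
  have e2 : 6 * (s / M) * (1 / √a) = 6 * (s / M) * √b / (√a * √b) := by field_simp
  rw [e1, e2, abs_div, abs_of_pos (mul_pos hsa hsb)]
  gcongr

/-- Normalization comparison for resolving pairs. -/
theorem twirl_normalization_close :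
    ∃ C : ℝ, 0 < C ∧ ∀ (n t : ℕ), 1 ≤ n → (t : ℝ) ≤ 2 ^ ((n : ℝ) / 2) / C →
      ∀ I : PF n, PInj I → piSize I = t →
      ∀ x y : TW n, I x = none → (¬ ∃ a, I a = some y) →
      ∀ p ∈ RI (Function.update I x (some y)),
      |1 / Real.sqrt (((RI (Function.update I x (some y))).ncard : ℝ) * ((2 : ℝ) ^ (2 * n) - t)) -
        1 / Real.sqrt (((RxI I x).ncard : ℝ) * ((Vset (twirl p.1 p.2 I) (p.1 x)).ncard : ℝ))| ≤
      C * ((t : ℝ) ^ 2 / 2 ^ n) *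
        (1 / Real.sqrt (((RI (Function.update I x (some y))).ncard : ℝ) * ((2 : ℝ) ^ (2 * n) - t))) := by
  classical
  refine ⟨6, by norm_num, ?_⟩
  intro n t _ ht I hI hIt x y hx hy p hp
  have hy' : y ∉ piIm I := hy
  have hpV := mem_RI_update.1 hp
  have hpR : p ∈ RxI I x := mem_RxI_of_mem_Vset hx hpV
  have hM : (0 : ℝ) < 2 ^ n := by positivity
  have hsM : 36 * (t : ℝ) ^ 2 ≤ 2 ^ n := by
    have h1 : (6 * (t : ℝ)) ^ 2 ≤ ((2 : ℝ) ^ ((n : ℝ) / 2)) ^ 2 :=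
      pow_le_pow_left₀ (by positivity) (by linarith) 2
    rw [← Real.rpow_natCast, ← Real.rpow_natCast, ← Real.rpow_mul (by norm_num)] at h1
    have h2 : (n : ℝ) / 2 * ((2 : ℕ) : ℝ) = n := by push_cast; ring
    rw [h2, Real.rpow_natCast, Real.rpow_natCast] at h1
    linarith
  have hk : (0 : ℝ) < (RxI I x).ncard := by
    exact_mod_cast (Set.ncard_pos).2 ⟨p, hpR⟩
  have hcompl : (((piIm I)ᶜ.ncard : ℕ) : ℝ) = (2 : ℝ) ^ (2 * n) - t := by
    have h := Set.ncard_add_ncard_compl (piIm I)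
    rw [ncard_piIm hI, hIt, card_TW] at h
    have h' : (t : ℝ) + ((piIm I)ᶜ.ncard : ℝ) = 2 ^ n * 2 ^ n := by exact_mod_cast h
    rw [two_mul, pow_add]
    linarith
  -- Allowedness supplies a witness, so the bounds on `|V|` hold for every pair in `R_{x,I}`.
  have hlow : ∀ q ∈ RxI I x, (2 : ℝ) ^ n * 2 ^ n - 3 * (t : ℝ) ^ 2 * 2 ^ n ≤
      ((Vset (twirl q.1 q.2 I) (q.1 x)).ncard : ℝ) := by
    rintro q ⟨-, v, hv⟩
    have h := le_ncard_Vset (twirl_apply_eq_none hx) hv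
    rw [piSize_twirl, hIt] at h
    have h' : (2 : ℝ) ^ n * 2 ^ n ≤ ((Vset (twirl q.1 q.2 I) (q.1 x)).ncard : ℝ)
        + 3 * (t : ℝ) ^ 2 * 2 ^ n := by exact_mod_cast h
    linarith
  have hup : ∀ q : Equiv.Perm (TW n) × Equiv.Perm (TW n),
      ((Vset (twirl q.1 q.2 I) (q.1 x)).ncard : ℝ) ≤ 2 ^ n * 2 ^ n := by
    intro q
    exact_mod_cast ncard_Vset_le (twirl q.1 q.2 I) (q.1 x)
  have hsum : ((RI (Function.update I x (some y))).ncard : ℝ) * ((2 : ℝ) ^ (2 * n) - t) =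
      ∑ q ∈ (RxI I x).toFinset, ((Vset (twirl q.1 q.2 I) (q.1 x)).ncard : ℝ) := by
    rw [← hcompl]
    exact_mod_cast card_RI_mul hx hy'
  have hcard : (RxI I x).toFinset.card = (RxI I x).ncard :=
    (Set.ncard_eq_toFinset_card' _).symm
  refine inv_sqrt_close hk hM (by positivity) hsM ?_ ?_ ?_ ?_
  · rw [hsum, ← hcard, ← nsmul_eq_mul]
    exact Finset.card_nsmul_le_sum _ _ _ fun q hq => hlow q (Set.mem_toFinset.1 hq)
  · rw [hsum, ← hcard, ← nsmul_eq_mul]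
    exact Finset.sum_le_card_nsmul _ _ _ fun q _ => hup q
  · exact mul_le_mul_of_nonneg_left (hlow p hpR) hk.le
  · exact mul_le_mul_of_nonneg_left (hup p) hk.le

end CPO
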